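/- arXiv:2404.19223 — 2 statements merged into one kernel-verified Lean document; each statement's English description precedes it below -/
import Mathlib

section
/- Attainment of the supremum for closed specifications: if f : (Fin n → ℝ) → (Fin n → ℝ) is continuous, S is a closed subset of the space of trajectories, x is a state, and the set Adm := {ε : ℝ | 0 ≤ ε ∧ ξ(x,ε) ⊆ S} is nonempty and bounded above, then its supremum is attained: ξ(x, sSup Adm) ⊆ S, i.e. sSup Adm ∈ Adm. -/
/-!
For `ε ≥ 0`, the trajectories perturbed by at most `ε` are exactly those driven by `ε • d`, where
`d` is a disturbance sequence of norm at most `1`. So `ε` is admissible iff, for each such `d`,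
the trajectory driven by `ε • d` lies in `S`. That trajectory depends continuously on `ε`, hence
the admissible bounds form an intersection of closed sets, and a nonempty closed set that is
bounded above contains its supremum.
-/

open Classical Set Filter

noncomputable section

/-- The set of perturbed trajectories of length `N` of the system
`x(k+1) = f (x k) + d k` with `‖d k‖_∞ ≤ ε`, starting at `x`.
The norm on `Fin n → ℝ` is the sup norm. -/
def xi {n : ℕ} (N : ℕ) [NeZero N] (f : (Fin n → ℝ) → (Fin n → ℝ))
    (x : Fin n → ℝ) (ε : ℝ) : Set (Fin N → (Fin n → ℝ)) :=
  {w | w 0 = x ∧ ∀ k : Fin N, ∀ h : (k : ℕ) + 1 < N,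
    ‖w ⟨(k : ℕ) + 1, h⟩ - f (w k)‖ ≤ ε}

/-- The resilience of the system w.r.t. the specification (trajectory set) `S`
and initial state `x`. -/
def gres {n N : ℕ} [NeZero N] (f : (Fin n → ℝ) → (Fin n → ℝ))
    (S : Set (Fin N → (Fin n → ℝ))) (x : Fin n → ℝ) : ENNReal :=
  if xi N f x 0 ⊆ S then
    sSup {e : ENNReal | ∃ ε : ℝ, 0 ≤ ε ∧ e = ENNReal.ofReal ε ∧ xi N f x ε ⊆ S}
  else 0

open scoped Pointwise

section Driven

variable {E : Type*}

/-- The trajectory `v (k + 1) = f (v k) + d k` from `x` under the disturbance sequence `d`. The time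
axis is `ℕ`; a trajectory of horizon `N` is its restriction to `Fin N`. -/
def drivenTrajectory [Add E] (f : E → E) (x : E) (d : ℕ → E) : ℕ → E
  | 0 => x
  | k + 1 => f (drivenTrajectory f x d k) + d k

theorem continuous_drivenTrajectory [TopologicalSpace E] [Add E] [ContinuousAdd E] {f : E → E}
    (hf : Continuous f) (x : E) : Continuous (drivenTrajectory f x) := by
  refine continuous_pi fun k => ?_
  induction k with
  | zero => exact continuous_const
  | succ k ih => exact (hf.comp ih).add (continuous_apply k)

theorem drivenTrajectory_eq_of_step [Add E] {N : ℕ} [NeZero N] {f : E → E} {d : ℕ → E}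
    {w : Fin N → E}
    (hstep : ∀ (k : Fin N) (h : (k : ℕ) + 1 < N), w ⟨k + 1, h⟩ = f (w k) + d k) (k : Fin N) :
    drivenTrajectory f (w 0) d k = w k := by
  obtain ⟨k, hk⟩ := k
  induction k with
  | zero => rfl
  | succ k ih =>
    have hk' : k < N := k.lt_succ_self.trans hk
    exact (congrArg (f · + d k) (ih hk')).trans (hstep ⟨k, hk'⟩ hk).symm

end Driven

/-- The trajectories `w` of horizon `N` from `x` with `‖w (k + 1) - f (w k)‖ ≤ ε`: the analogue of
`xi` in an arbitrary normed group, definitionally equal to it on `Fin n → ℝ`. -/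
def perturbedTrajectories {E : Type*} [SeminormedAddCommGroup E] (N : ℕ) [NeZero N] (f : E → E)
    (x : E) (ε : ℝ) : Set (Fin N → E) :=
  {w | w 0 = x ∧ ∀ k : Fin N, ∀ h : (k : ℕ) + 1 < N, ‖w ⟨(k : ℕ) + 1, h⟩ - f (w k)‖ ≤ ε}

theorem perturbedTrajectories_eq_image {E : Type*} [SeminormedAddCommGroup E] (N : ℕ) [NeZero N]
    (f : E → E) (x : E) {ε : ℝ} (hε : 0 ≤ ε) :
    perturbedTrajectories N f x ε =
      (fun d (k : Fin N) => drivenTrajectory f x d k) ''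
        univ.pi fun _ => Metric.closedBall 0 ε := by
  ext w
  constructor
  · rintro ⟨rfl, hw⟩
    let d : ℕ → E := fun k =>
      if h : k + 1 < N then w ⟨k + 1, h⟩ - f (w ⟨k, k.lt_succ_self.trans h⟩) else 0
    refine ⟨d, fun k _ => ?_, funext <| drivenTrajectory_eq_of_step fun k h => ?_⟩
    · rw [mem_closedBall_zero_iff]
      by_cases h : k + 1 < N
      · simpa only [d, dif_pos h] using hw ⟨k, k.lt_succ_self.trans h⟩ h
      · simpa only [d, dif_neg h, norm_zero] using hε
    · simp only [d, dif_pos h, Fin.eta, add_sub_cancel]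
  · rintro ⟨d, hd, rfl⟩
    refine ⟨by simp only [Fin.val_zero, drivenTrajectory], fun k _ => ?_⟩
    simpa only [drivenTrajectory, add_sub_cancel_left] using
      mem_closedBall_zero_iff.1 (hd k (mem_univ _))

section NormedSpace

variable {E : Type*} [NormedAddCommGroup E] [NormedSpace ℝ E] {N : ℕ} [NeZero N] {f : E → E}
  {S : Set (Fin N → E)}

theorem perturbedTrajectories_subset_iff (x : E) {ε : ℝ} (hε : 0 ≤ ε) :
    perturbedTrajectories N f x ε ⊆ S ↔
      ∀ d ∈ univ.pi fun _ : ℕ => Metric.closedBall (0 : E) 1,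
        (fun k : Fin N => drivenTrajectory f x (ε • d) k) ∈ S := by
  have hball : (univ.pi fun _ : ℕ => Metric.closedBall (0 : E) ε) =
      ε • univ.pi fun _ : ℕ => Metric.closedBall (0 : E) 1 := by
    rw [smul_set_univ_pi]
    simp only [Pi.smul_def, smul_unitClosedBall_of_nonneg hε]
  rw [perturbedTrajectories_eq_image N f x hε, hball, ← image_smul, image_image, image_subset_iff]
  rfl

theorem isClosed_setOf_perturbedTrajectories_subset (hf : Continuous f) (hS : IsClosed S) (x : E) :
    IsClosed {ε : ℝ | 0 ≤ ε ∧ perturbedTrajectories N f x ε ⊆ S} := by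
  have hscale (d : ℕ → E) :
      Continuous fun (ε : ℝ) (k : Fin N) => drivenTrajectory f x (ε • d) k :=
    continuous_pi fun k => (continuous_apply (k : ℕ)).comp <|
      (continuous_drivenTrajectory hf x).comp (continuous_id.smul continuous_const)
  have hinter : {ε : ℝ | 0 ≤ ε ∧ perturbedTrajectories N f x ε ⊆ S} =
      Ici 0 ∩ ⋂ d ∈ univ.pi fun _ : ℕ => Metric.closedBall (0 : E) 1,
        (fun ε (k : Fin N) => drivenTrajectory f x (ε • d) k) ⁻¹' S := by
    ext ε
    simpa only [mem_ofPred_eq, mem_inter_iff, mem_Ici, mem_iInter₂, mem_preimage] using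
      and_congr_right fun hε => perturbedTrajectories_subset_iff x hε
  rw [hinter]
  exact isClosed_Ici.inter <| isClosed_biInter fun d _ => hS.preimage (hscale d)

theorem sSup_mem_admissible_general (hf : Continuous f) (hS : IsClosed S) (x : E)
    (hne : {ε : ℝ | 0 ≤ ε ∧ perturbedTrajectories N f x ε ⊆ S}.Nonempty)
    (hbdd : BddAbove {ε : ℝ | 0 ≤ ε ∧ perturbedTrajectories N f x ε ⊆ S}) :
    sSup {ε : ℝ | 0 ≤ ε ∧ perturbedTrajectories N f x ε ⊆ S} ∈
      {ε : ℝ | 0 ≤ ε ∧ perturbedTrajectories N f x ε ⊆ S} :=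
  (isClosed_setOf_perturbedTrajectories_subset hf hS x).csSup_mem hne hbdd

end NormedSpace

/-- Attainment of the supremum for closed specifications: if `f` is continuous,
`S` is closed, and the set of admissible disturbance bounds is nonempty and
bounded above, then its supremum is itself admissible. -/
theorem sSup_mem_admissible {n N : ℕ} (hn : 1 ≤ n) [NeZero N]
    (f : (Fin n → ℝ) → (Fin n → ℝ)) (hf : Continuous f)
    (S : Set (Fin N → (Fin n → ℝ))) (hS : IsClosed S) (x : Fin n → ℝ)
    (hne : {ε : ℝ | 0 ≤ ε ∧ xi N f x ε ⊆ S}.Nonempty)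
    (hbdd : BddAbove {ε : ℝ | 0 ≤ ε ∧ xi N f x ε ⊆ S}) :
    sSup {ε : ℝ | 0 ≤ ε ∧ xi N f x ε ⊆ S} ∈ {ε : ℝ | 0 ≤ ε ∧ xi N f x ε ⊆ S} :=
  sSup_mem_admissible_general hf hS x hne hbdd

end
end

section
/- Proposition 3.3(vi) (resilience of a set of initial states): for any map f, any set S of trajectories, and any set of initial states K ⊆ (Fin n → ℝ), define the set resilience g_S(K) ∈ ℝ≥0∞ as sSup {(ε : ℝ≥0∞) | ε is a nonnegative real with ξ(x,ε) ⊆ S for every x ∈ K} when ξ(x,0) ⊆ S for every x ∈ K, and g_S(K) = 0 otherwise. Then g_S(K) = ⨅ x ∈ K, g_S(x). -/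
open Classical Set Filter

noncomputable section

/-- The resilience of a set `K` of initial states: the supremum of the
disturbance levels `ε ≥ 0` under which every trajectory started in `K`
satisfies the specification (when the nominal trajectories do), `0` otherwise. -/
def gresSet {n N : ℕ} [NeZero N] (f : (Fin n → ℝ) → (Fin n → ℝ))
    (S : Set (Fin N → (Fin n → ℝ))) (K : Set (Fin n → ℝ)) : ENNReal :=
  if ∀ x ∈ K, xi N f x 0 ⊆ S then
    sSup {e : ENNReal | ∃ ε : ℝ, 0 ≤ ε ∧ e = ENNReal.ofReal ε ∧
      ∀ x ∈ K, xi N f x ε ⊆ S}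
  else 0

/-!
Since `xi N f x ε` grows with `ε`, the levels tolerated at `x` form a lower set `A x` of `ℝ≥0`.
If the nominal trajectories violate `S`, then `A x` is empty and its supremum is `0`, so the case
distinction in the definitions disappears: `gres f S x = sup A x` and
`gresSet f S K = sup ⋂ x ∈ K, A x`. Suprema commute with intersections of lower sets because
`ℝ≥0` is order dense in `ℝ≥0∞`: a level strictly below every `sup A x` lies in every `A x`.
For `K = ∅` both sides are `⊤`.
-/

section Order

variable {α β : Type*} {ι : Sort*}

theorem sSup_image_iInter_of_isLowerSet [CompleteLinearOrder α] [LinearOrder β] {c : β → α}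
    (hc : Monotone c) (hdense : ∀ a b, a < b → ∃ y, a < c y ∧ c y < b) {s : ι → Set β}
    (hs : ∀ i, IsLowerSet (s i)) :
    sSup (c '' ⋂ i, s i) = ⨅ i, sSup (c '' s i) := by
  refine le_antisymm (le_iInf fun i => sSup_le_sSup (image_mono (iInter_subset s i)))
    (le_of_forall_lt fun a ha => ?_)
  obtain ⟨y, hay, hy⟩ := hdense a _ ha
  have y_mem : y ∈ ⋂ i, s i := mem_iInter.2 fun i => by
    obtain ⟨_, ⟨z, hz, rfl⟩, hyz⟩ := lt_sSup_iff.1 (hy.trans_le (iInf_le _ i))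
    exact hs i (hc.reflect_lt hyz).le hz
  exact hay.trans_le (le_sSup (mem_image_of_mem c y_mem))

end Order

section Resilience

open scoped NNReal ENNReal

variable {n N : ℕ} [NeZero N] (f : (Fin n → ℝ) → (Fin n → ℝ))
  (S : Set (Fin N → (Fin n → ℝ)))

theorem xi_mono (x : Fin n → ℝ) : Monotone (xi N f x) :=
  fun _ _ h _ hw => ⟨hw.1, fun k hk => (hw.2 k hk).trans h⟩

/-- The disturbance levels under which every trajectory started at `x` satisfies the
specification `S`; the resilience at `x` is their supremum. Levels are taken in `ℝ≥0`, so that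
the sign condition on `ε` is part of the type. -/
def toleratedLevels (x : Fin n → ℝ) : Set ℝ≥0 :=
  {ε | xi N f x ε ⊆ S}

theorem isLowerSet_toleratedLevels (x : Fin n → ℝ) : IsLowerSet (toleratedLevels f S x) :=
  fun _ _ hle h => (xi_mono f x (NNReal.coe_le_coe.2 hle)).trans h

theorem gresSet_eq_sSup (K : Set (Fin n → ℝ)) :
    gresSet f S K = sSup ((↑) '' ⋂ x : K, toleratedLevels f S x : Set ℝ≥0∞) := by
  have mem_levels (ε : ℝ≥0) :
      ε ∈ ⋂ x : K, toleratedLevels f S x ↔ ∀ x ∈ K, xi N f x ε ⊆ S := by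
    simp [toleratedLevels]
  rw [gresSet]
  split_ifs with h0
  · congr 1
    ext e
    constructor
    · rintro ⟨ε, hε, rfl, h⟩
      exact ⟨⟨ε, hε⟩, (mem_levels _).2 h, (ENNReal.ofReal_eq_coe_nnreal hε).symm⟩
    · rintro ⟨ε, hε, rfl⟩
      exact ⟨ε, ε.2, ENNReal.ofReal_coe_nnreal.symm, (mem_levels ε).1 hε⟩
  · have no_level : ⋂ x : K, toleratedLevels f S x = ∅ :=
      eq_empty_of_forall_notMem fun ε hε =>
        h0 fun x hx => (xi_mono f x ε.2).trans ((mem_levels ε).1 hε x hx)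
    rw [no_level, image_empty, sSup_empty, bot_eq_zero]

theorem gresSet_singleton (x : Fin n → ℝ) : gresSet f S {x} = gres f S x := by
  simp only [gresSet, gres, mem_singleton_iff, forall_eq]

theorem gres_eq_sSup (x : Fin n → ℝ) :
    gres f S x = sSup ((↑) '' toleratedLevels f S x : Set ℝ≥0∞) := by
  rw [← gresSet_singleton, gresSet_eq_sSup, iInter_coe_set, biInter_singleton]

end Resilience

/-- Proposition 3.3(vi): the resilience of a set of initial states is the
infimum of the resiliences of its points. -/
theorem gresSet_eq_iInf {n N : ℕ} (hn : 1 ≤ n) [NeZero N]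
    (f : (Fin n → ℝ) → (Fin n → ℝ)) (S : Set (Fin N → (Fin n → ℝ)))
    (K : Set (Fin n → ℝ)) :
    gresSet f S K = ⨅ x ∈ K, gres f S x := by
  calc gresSet f S K
      = sSup (ENNReal.ofNNReal '' ⋂ x : K, toleratedLevels f S x) := gresSet_eq_sSup f S K
    _ = ⨅ x : K, sSup (ENNReal.ofNNReal '' toleratedLevels f S x) :=
        sSup_image_iInter_of_isLowerSet ENNReal.coe_mono
          (fun _ _ => ENNReal.lt_iff_exists_nnreal_btwn.1)
          fun x => isLowerSet_toleratedLevels f S x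
    _ = ⨅ x : K, gres f S x := by simp only [gres_eq_sSup]
    _ = ⨅ x ∈ K, gres f S x := iInf_subtype'' K (gres f S)

end
end
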